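/- Let D be a finite universal distance set consisting of a single block together with 0. Then the countable Urysohn space M with distance set D is indivisible: for every colouring χ : M → {0,1} there exist i ∈ {0,1} and a subspace of M isometric to M on which χ is constantly i. -/

import Mathlib

namespace Sauer

def IsMetricTriple (a b c : ℝ) : Prop := a ≤ b + c ∧ b ≤ a + c ∧ c ≤ a + b

def IsUniversalDist (D : Set ℝ) : Prop :=
  D.Finite ∧ (0 : ℝ) ∈ D ∧ (∀ d ∈ D, 0 ≤ d) ∧
    ∀ s x₀ y₀ x₁ y₁ : ℝ, s ∈ D → x₀ ∈ D → y₀ ∈ D → x₁ ∈ D → y₁ ∈ D →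
      0 < x₀ → 0 < y₀ → 0 < x₁ → 0 < y₁ →
      IsMetricTriple x₀ y₀ s → IsMetricTriple x₁ y₁ s →
      ∃ t ∈ D, 0 < t ∧ IsMetricTriple x₀ x₁ t ∧ IsMetricTriple y₀ y₁ t

open Classical in
noncomputable def dsucc (D : Set ℝ) (r : ℝ) : ℝ :=
  if ({s | s ∈ D ∧ r < s}).Nonempty then sInf {s | s ∈ D ∧ r < s} else r

noncomputable def dpred (D : Set ℝ) (r : ℝ) : ℝ := sSup {s | s ∈ D ∧ s < r}

def IsBlock (D B : Set ℝ) : Prop :=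
  ∃ (n : ℕ) (b : ℕ → ℝ),
    B = {x | ∃ i, i ≤ n ∧ x = b i} ∧
    (∀ i ≤ n, b i ∈ D) ∧ 0 < b 0 ∧
    (∀ i < n, b i < b (i + 1)) ∧
    (∀ y ∈ D, y < b 0 → 2 * y < b 0) ∧
    (∀ i < n, b (i + 1) = dsucc D (b i)) ∧
    (∀ i < n, b (i + 1) ≤ b i + b 0)

def IsJump (D : Set ℝ) (r : ℝ) : Prop := r ∈ D ∧ ∀ s ∈ D, r < s → 2 * r < s

structure Katetov (D : Set ℝ) (M : Type) [MetricSpace M] where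
  dom : Finset M
  f : M → ℝ
  mem : ∀ x ∈ dom, f x ∈ D
  pos : ∀ x ∈ dom, 0 < f x
  ineq1 : ∀ x ∈ dom, ∀ y ∈ dom, |f x - f y| ≤ dist x y
  ineq2 : ∀ x ∈ dom, ∀ y ∈ dom, dist x y ≤ f x + f y

variable {D : Set ℝ} {M : Type} [MetricSpace M]

def orb (t : Katetov D M) : Set M :=
  {y | y ∉ t.dom ∧ ∀ x ∈ t.dom, dist y x = t.f x}

noncomputable def rank (t : Katetov D M) : ℝ := sInf (t.f '' ↑t.dom)

def orbDistSet (s t : Katetov D M) : Set ℝ :=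
  {m | ∃ x ∈ orb s, ∃ y ∈ orb t, dist x y = m}

noncomputable def dminK (s t : Katetov D M) : ℝ := sInf (orbDistSet s t)

noncomputable def dmin (A B : Set M) : ℝ := sInf {d | ∃ x ∈ A, ∃ y ∈ B, dist x y = d}

def IsHomogeneous (M : Type) [MetricSpace M] : Prop :=
  ∀ (A : Finset M) (f : M → M),
    (∀ x ∈ A, ∀ y ∈ A, dist (f x) (f y) = dist x y) →
    ∃ g : M ≃ᵢ M, ∀ x ∈ A, g x = f x

def IsUrysohn (D : Set ℝ) (M : Type) [MetricSpace M] : Prop :=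
  Countable M ∧ (∀ x y : M, dist x y ∈ D) ∧ IsHomogeneous M ∧
    ∀ (N : Type) [MetricSpace N], Finite N → (∀ x y : N, dist x y ∈ D) →
      ∃ f : N → M, Isometry f

/-- Distances of `M` are `0` or one of the `b j`, `j ≤ n`, with the block properties. -/
structure Ctx (n : ℕ) (b : ℕ → ℝ) (M : Type) [MetricSpace M] : Prop where
  hd : ∀ x y : M, dist x y = 0 ∨ ∃ j ≤ n, dist x y = b j
  pos : 0 < b 0
  mono : ∀ i j, i < j → j ≤ n → b i < b j
  gap : ∀ i, i < n → b (i + 1) ≤ b i + b 0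

def Val (n : ℕ) (b : ℕ → ℝ) (S : Finset (M × ℝ)) : Prop :=
  (∀ s ∈ S, ∃ j ≤ n, s.2 = b j) ∧
    ∀ s ∈ S, ∀ t ∈ S, s.2 ≤ t.2 + dist s.1 t.1 ∧ dist s.1 t.1 ≤ s.2 + t.2

def Inn (S : Finset (M × ℝ)) (C : Set M) : Prop := ∀ s ∈ S, s.1 ∈ C

def Rz (y : M) (S : Finset (M × ℝ)) : Prop := ∀ s ∈ S, dist y s.1 = s.2

def Copy (n : ℕ) (b : ℕ → ℝ) (C : Set M) : Prop :=
  ∀ S : Finset (M × ℝ), Val n b S → Inn S C → ∃ y ∈ C, Rz y S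

variable {n : ℕ} {b : ℕ → ℝ}

lemma Ctx.mono_le (h : Ctx n b M) {i j : ℕ} (hij : i ≤ j) (hj : j ≤ n) : b i ≤ b j := by
  rcases hij.lt_or_eq with h1 | h1
  · exact (h.mono i j h1 hj).le
  · rw [h1]

lemma Ctx.b_pos (h : Ctx n b M) {j : ℕ} (hj : j ≤ n) : 0 < b j :=
  lt_of_lt_of_le h.pos (h.mono_le (Nat.zero_le j) hj)

lemma Ctx.dist_ne (h : Ctx n b M) {x y : M} (hxy : x ≠ y) : ∃ j ≤ n, dist x y = b j := by
  rcases h.hd x y with h1 | h1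
  · exact absurd (dist_eq_zero.1 h1) hxy
  · exact h1

lemma Ctx.le_dist (h : Ctx n b M) {x y : M} (hxy : x ≠ y) : b 0 ≤ dist x y := by
  obtain ⟨j, hj, h1⟩ := h.dist_ne hxy
  rw [h1]; exact h.mono_le (Nat.zero_le j) hj

lemma Val.pos (h : Ctx n b M) {S : Finset (M × ℝ)} (hS : Val n b S) {s : M × ℝ} (hs : s ∈ S) :
    b 0 ≤ s.2 ∧ 0 < s.2 := by
  obtain ⟨j, hj, h1⟩ := hS.1 s hs
  rw [h1]; exact ⟨h.mono_le (Nat.zero_le j) hj, h.b_pos hj⟩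

lemma Val.subset {S T : Finset (M × ℝ)} (hT : Val n b T) (h : S ⊆ T) : Val n b S :=
  ⟨fun s hs => hT.1 s (h hs), fun s hs t ht => hT.2 s (h hs) t (h ht)⟩

open Classical in
lemma val_union {A B : Finset (M × ℝ)} (hA : Val n b A) (hB : Val n b B)
    (h : ∀ s ∈ A, ∀ t ∈ B, s.2 ≤ t.2 + dist s.1 t.1 ∧ t.2 ≤ s.2 + dist s.1 t.1 ∧
      dist s.1 t.1 ≤ s.2 + t.2) : Val n b (A ∪ B) := by
  refine ⟨fun s hs => ?_, fun s hs t ht => ?_⟩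
  · rcases Finset.mem_union.1 hs with h1 | h1
    · exact hA.1 s h1
    · exact hB.1 s h1
  · rcases Finset.mem_union.1 hs with h1 | h1 <;> rcases Finset.mem_union.1 ht with h2 | h2
    · exact hA.2 s h1 t h2
    · exact ⟨(h s h1 t h2).1, (h s h1 t h2).2.2⟩
    · have := h t h2 s h1
      rw [dist_comm t.1 s.1] at this
      exact ⟨this.2.1, by linarith [this.2.2]⟩
    · exact hB.2 s h1 t h2

open Classical in
lemma val_insert (hX : Ctx n b M) {A : Finset (M × ℝ)} (hA : Val n b A) {x : M} {a : ℝ}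
    (ha : ∃ j ≤ n, a = b j)
    (h : ∀ s ∈ A, s.2 ≤ a + dist x s.1 ∧ a ≤ s.2 + dist x s.1 ∧
      dist x s.1 ≤ s.2 + a) : Val n b (insert (x, a) A) := by
  have h0 : Val n b ({(x, a)} : Finset (M × ℝ)) := by
    obtain ⟨j, hj, rfl⟩ := ha
    have := hX.b_pos hj
    refine ⟨fun s hs => ?_, fun s hs t ht => ?_⟩
    · rw [Finset.mem_singleton.1 hs]; exact ⟨j, hj, rfl⟩
    · rw [Finset.mem_singleton.1 hs, Finset.mem_singleton.1 ht]
      simp only [dist_self]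
      constructor <;> linarith
  rw [Finset.insert_eq]
  refine val_union h0 hA ?_
  intro s hs t ht
  rw [Finset.mem_singleton.1 hs]
  have := h t ht
  exact ⟨this.2.1, this.1, by linarith [this.2.2]⟩

open Classical in
/-- the type of a point `c` over `P` -/
noncomputable def ty (P : Finset M) (c : M) : Finset (M × ℝ) := P.image (fun p => (p, dist c p))

open Classical in
lemma mem_ty {P : Finset M} {c : M} {s : M × ℝ} : s ∈ ty P c ↔ s.1 ∈ P ∧ s.2 = dist c s.1 := by
  unfold ty
  rw [Finset.mem_image]
  constructor
  · rintro ⟨p, hp, rfl⟩; exact ⟨hp, rfl⟩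
  · rintro ⟨h1, h2⟩; exact ⟨s.1, h1, by rw [← h2]⟩

lemma rz_ty {P : Finset M} {c v : M} : Rz v (ty P c) ↔ ∀ p ∈ P, dist v p = dist c p := by
  constructor
  · intro h p hp
    exact h (p, dist c p) (mem_ty.2 ⟨hp, rfl⟩)
  · intro h s hs
    rw [mem_ty] at hs
    rw [hs.2, h _ hs.1]

lemma val_of_rz (hX : Ctx n b M) {y : M} {S : Finset (M × ℝ)} (h1 : Rz y S)
    (h2 : ∀ s ∈ S, y ≠ s.1) : Val n b S := by
  refine ⟨fun s hs => ?_, fun s hs t ht => ?_⟩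
  · rw [← h1 s hs]; exact hX.dist_ne (h2 s hs)
  · rw [← h1 s hs, ← h1 t ht]
    exact ⟨by linarith [dist_triangle y t.1 s.1, dist_comm t.1 s.1], dist_triangle_left _ _ _⟩

lemma val_ty (hX : Ctx n b M) {P : Finset M} {c : M} (hc : c ∉ P) : Val n b (ty P c) :=
  val_of_rz hX (rz_ty.2 fun _ _ => rfl) fun s hs h => hc (h ▸ (mem_ty.1 hs).1)

open Classical in
/-- Realisations outside a given finite set. -/
lemma copy_avoid (hX : Ctx n b M) {C : Set M} (hC : Copy n b C) (P : Finset M) :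
    ∀ (k : ℕ) (S : Finset (M × ℝ)), (P.filter (fun p => Rz p S)).card ≤ k → Val n b S →
      Inn S C → ∃ y ∈ C, y ∉ P ∧ Rz y S := by
  intro k
  induction k with
  | zero =>
    intro S hk hS hSC
    obtain ⟨y, hy, hyS⟩ := hC S hS hSC
    refine ⟨y, hy, fun hyP => ?_, hyS⟩
    have : y ∈ P.filter (fun p => Rz p S) := Finset.mem_filter.2 ⟨hyP, hyS⟩
    rw [Nat.le_zero, Finset.card_eq_zero] at hk
    rw [hk] at this
    simp at this
  | succ k ih =>
    intro S hk hS hSC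
    obtain ⟨y, hy, hyS⟩ := hC S hS hSC
    by_cases hyP : y ∈ P
    swap
    · exact ⟨y, hy, hyP, hyS⟩
    have hval : Val n b (insert (y, b 0) S) := by
      refine val_insert hX hS ⟨0, Nat.zero_le _, rfl⟩ ?_
      intro s hs
      have h1 := hS.pos hX hs
      have h2 := hyS s hs
      have h3 := hX.pos
      rw [h2]
      refine ⟨by linarith, by linarith, by linarith⟩
    obtain ⟨z, hz, hzP, hzS⟩ := ih (insert (y, b 0) S) (by
      have : P.filter (fun p => Rz p (insert (y, b 0) S)) ⊂ P.filter (fun p => Rz p S) := by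
        rw [Finset.ssubset_iff_of_subset]
        · refine ⟨y, Finset.mem_filter.2 ⟨hyP, hyS⟩, ?_⟩
          intro h
          have := (Finset.mem_filter.1 h).2 (y, b 0) (Finset.mem_insert_self _ _)
          simp only [dist_self] at this
          linarith [hX.pos]
        · intro p hp
          rw [Finset.mem_filter] at hp ⊢
          exact ⟨hp.1, fun s hs => hp.2 s (Finset.mem_insert_of_mem hs)⟩
      have := Finset.card_lt_card this
      omega) hval (by
      intro s hs
      rcases Finset.mem_insert.1 hs with h | h
      · rw [h]; exact hy
      · exact hSC s h)
    exact ⟨z, hz, hzP, fun s hs => hzS s (Finset.mem_insert_of_mem hs)⟩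

open Classical in
lemma trans_ext (hX : Ctx n b M) {C : Set M} (hC : Copy n b C) (P : Finset M)
    (hP : ∀ p ∈ P, p ∈ C) (U : Finset (Finset (M × ℝ) × Finset (M × ℝ)))
    (hval : ∀ u ∈ U, Val n b (u.1 ∪ u.2)) (hin : ∀ u ∈ U, Inn (u.1 ∪ u.2) C)
    (hdom1 : ∀ u ∈ U, ∀ s ∈ u.1, s.1 ∈ P) (hdom2 : ∀ u ∈ U, ∀ p ∈ P, ∃ a, (p, a) ∈ u.1)
    (K : ∀ u ∈ U, ∀ u' ∈ U, ∀ v ∈ C, ∀ v' ∈ C, Rz v u.1 → Rz v' u'.1 → ∀ s ∈ u.2,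
      ∃ s' ∈ u'.2, s'.1 = s.1 ∧ |s.2 - s'.2| ≤ dist v v' ∧ dist v v' ≤ s.2 + s'.2) :
    ∃ C', Copy n b C' ∧ C' ⊆ C ∧ (∀ p ∈ P, p ∈ C') ∧
      ∀ u ∈ U, ∀ c ∈ C', Rz c u.1 → Rz c u.2 := by
  set C' : Set M := {c | c ∈ C ∧ ∀ u ∈ U, ∀ v ∈ C, Rz v u.1 → ∀ s ∈ u.2,
    |dist v c - s.2| ≤ dist c s.1 ∧ dist c s.1 ≤ dist v c + s.2} with hC'
  have hreal : ∀ u ∈ U, ∀ c ∈ C', Rz c u.1 → Rz c u.2 := by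
    intro u hu c hc hcu s hs
    have := hc.2 u hu c hc.1 hcu s hs
    rw [dist_self, zero_sub, abs_neg] at this
    have h2 := le_abs_self s.2
    linarith
  have hPC' : ∀ p ∈ P, p ∈ C' := by
    intro p hp
    refine ⟨hP p hp, fun u hu v hv hvu s hs => ?_⟩
    obtain ⟨a, ha⟩ := hdom2 u hu p hp
    have h1 : dist v p = a := hvu _ ha
    have h2 := (hval u hu).2 (p, a) (Finset.mem_union_left _ ha) s (Finset.mem_union_right _ hs)
    have h3 := (hval u hu).2 s (Finset.mem_union_right _ hs) (p, a) (Finset.mem_union_left _ ha)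
    simp only at h2 h3
    rw [dist_comm s.1 p] at h3
    rw [h1, abs_le]
    refine ⟨⟨by linarith, by linarith⟩, by linarith⟩
  refine ⟨C', ?_, fun c hc => hc.1, hPC', hreal⟩
  intro S hS hSC
  obtain ⟨y, hy, hyS⟩ := hC S hS (fun s hs => (hSC s hs).1)
  by_cases hyC' : y ∈ C'
  · exact ⟨y, hyC', hyS⟩
  set Q : Finset M := S.image Prod.fst ∪ P with hQ
  have hQC' : ∀ x ∈ Q, x ∈ C' := by
    intro x hx
    rcases Finset.mem_union.1 hx with h | h
    · obtain ⟨s, hs, rfl⟩ := Finset.mem_image.1 h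
      exact hSC s hs
    · exact hPC' x h
  have hyQ : y ∉ Q := fun h => hyC' (hQC' y h)
  have hV : ∃ V : Finset M, (∀ v ∈ V, v ∈ C ∧ ∃ u ∈ U, Rz v u.1) ∧
      ∀ u ∈ U, ∀ v0 ∈ C, Rz v0 u.1 → ∃ v ∈ V, Rz v u.1 ∧ dist v y = dist v0 y := by
    set E : Finset ℝ := insert 0 ((Finset.range (n + 1)).image b) with hE
    have hEd : ∀ x y : M, dist x y ∈ E := by
      intro x y
      rcases hX.hd x y with h | ⟨j, hj, h⟩
      · rw [h]; exact Finset.mem_insert_self _ _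
      · rw [h]
        exact Finset.mem_insert_of_mem (Finset.mem_image.2 ⟨j, Finset.mem_range.2 (by omega), rfl⟩)
    let W : (Finset (M × ℝ) × Finset (M × ℝ)) × ℝ → M := fun q =>
      if h : ∃ v ∈ C, Rz v q.1.1 ∧ dist v y = q.2 then h.choose else y
    have hW : ∀ q, (∃ v ∈ C, Rz v q.1.1 ∧ dist v y = q.2) →
        W q ∈ C ∧ Rz (W q) q.1.1 ∧ dist (W q) y = q.2 := by
      intro q h
      have := h.choose_spec
      simp only [W, dif_pos h]
      exact this
    refine ⟨((U ×ˢ E).filter (fun q => ∃ v ∈ C, Rz v q.1.1 ∧ dist v y = q.2)).image W, ?_, ?_⟩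
    · intro v hv
      obtain ⟨q, hq, rfl⟩ := Finset.mem_image.1 hv
      rw [Finset.mem_filter, Finset.mem_product] at hq
      have := hW q hq.2
      exact ⟨this.1, q.1, hq.1.1, this.2.1⟩
    · intro u hu v0 hv0 hr
      have hex : ∃ v ∈ C, Rz v u.1 ∧ dist v y = dist v0 y := ⟨v0, hv0, hr, rfl⟩
      have := hW (u, dist v0 y) hex
      refine ⟨W (u, dist v0 y), Finset.mem_image.2 ⟨(u, dist v0 y), ?_, rfl⟩, this.2.1, this.2.2⟩
      rw [Finset.mem_filter, Finset.mem_product]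
      exact ⟨⟨hu, hEd _ _⟩, hex⟩
  obtain ⟨V, hV1, hV2⟩ := hV
  have hphi : ∀ V : Finset M, (∀ v ∈ V, v ∈ C ∧ ∃ u ∈ U, Rz v u.1) →
      ∃ φ : M → M, (∀ x ∈ Q, φ x = x) ∧ (∀ v ∈ V, φ v ∈ C) ∧
        (∀ x ∈ Q ∪ V, ∀ x' ∈ Q ∪ V, dist (φ x) (φ x') = dist x x') ∧
        ∀ v ∈ V, ∀ u ∈ U, Rz v u.1 → Rz (φ v) u.2 := by
    intro V
    induction V using Finset.induction_on with
    | empty =>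
      intro _
      exact ⟨id, fun _ _ => rfl, by simp, fun _ _ _ _ => rfl, by simp⟩
    | insert v V hvV ih =>
      intro hV
      obtain ⟨φ, h1, h2, h3, h4⟩ := ih (fun x hx => hV x (Finset.mem_insert_of_mem hx))
      by_cases hvQ : v ∈ Q
      · refine ⟨φ, h1, ?_, ?_, ?_⟩
        · intro x hx
          rcases Finset.mem_insert.1 hx with rfl | hx
          · rw [h1 x hvQ]; exact (hQC' x hvQ).1
          · exact h2 x hx
        · have : Q ∪ insert v V = Q ∪ V := by
            ext x; simp only [Finset.mem_union, Finset.mem_insert]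
            constructor
            · rintro (h | rfl | h)
              · exact Or.inl h
              · exact Or.inl hvQ
              · exact Or.inr h
            · rintro (h | h)
              · exact Or.inl h
              · exact Or.inr (Or.inr h)
          rw [this]; exact h3
        · intro x hx u hu hxu
          rcases Finset.mem_insert.1 hx with rfl | hx
          · rw [h1 x hvQ]; exact hreal u hu x (hQC' x hvQ) hxu
          · exact h4 x hx u hu hxu
      · obtain ⟨hvC, u0, hu0, hvu0⟩ := hV v (Finset.mem_insert_self _ _)
        have hvQV : v ∉ Q ∪ V := by
          simp only [Finset.mem_union, not_or]; exact ⟨hvQ, hvV⟩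
        set X : Finset (M × ℝ) := (Q ∪ V).image (fun x => (φ x, dist v x)) with hXd
        have hX1 : Val n b X := by
          refine ⟨fun s hs => ?_, fun s hs t ht => ?_⟩
          · obtain ⟨x, hx, rfl⟩ := Finset.mem_image.1 hs
            exact hX.dist_ne (fun h => hvQV (h ▸ hx))
          · obtain ⟨x, hx, rfl⟩ := Finset.mem_image.1 hs
            obtain ⟨z, hz, rfl⟩ := Finset.mem_image.1 ht
            simp only
            rw [h3 x hx z hz]
            exact ⟨by linarith [dist_triangle v z x, dist_comm z x], dist_triangle_left _ _ _⟩
        have hX2 : Val n b u0.2 := (hval u0 hu0).subset Finset.subset_union_right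
        have hX3 : Val n b (X ∪ u0.2) := by
          refine val_union hX1 hX2 ?_
          intro s hs t ht
          obtain ⟨x, hx, rfl⟩ := Finset.mem_image.1 hs
          simp only
          by_cases hxQ : x ∈ Q
          · have := (hQC' x hxQ).2 u0 hu0 v hvC hvu0 t ht
            rw [h1 x hxQ]
            rw [abs_le] at this
            refine ⟨by linarith [this.1.2], by linarith [this.1.1], this.2⟩
          · have hxV : x ∈ V := (Finset.mem_union.1 hx).resolve_left hxQ
            obtain ⟨hxC, u', hu', hxu'⟩ := hV x (Finset.mem_insert_of_mem hxV)
            obtain ⟨s', hs', e1, e2, e3⟩ := K u0 hu0 u' hu' v hvC x hxC hvu0 hxu' t ht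
            have := h4 x hxV u' hu' hxu' s' hs'
            rw [← e1, this]
            rw [abs_le] at e2
            refine ⟨by linarith, by linarith [e2.2], by linarith [e2.1]⟩
        obtain ⟨w, hwC, hw⟩ := hC _ hX3 (by
          intro s hs
          rcases Finset.mem_union.1 hs with h | h
          · obtain ⟨x, hx, rfl⟩ := Finset.mem_image.1 h
            simp only
            by_cases hxQ : x ∈ Q
            · rw [h1 x hxQ]; exact (hQC' x hxQ).1
            · exact h2 x ((Finset.mem_union.1 hx).resolve_left hxQ)
          · exact hin u0 hu0 s (Finset.mem_union_right _ h))
        have hwx : ∀ x ∈ Q ∪ V, dist w (φ x) = dist v x := fun x hx =>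
          hw (φ x, dist v x) (Finset.mem_union_left _ (Finset.mem_image.2 ⟨x, hx, rfl⟩))
        have hwu0 : Rz w u0.2 := fun s hs => hw s (Finset.mem_union_right _ hs)
        have hne : ∀ x ∈ Q ∪ V, x ≠ v := fun x hx h => hvQV (h ▸ hx)
        refine ⟨Function.update φ v w, ?_, ?_, ?_, ?_⟩
        · intro x hx
          rw [Function.update_of_ne (hne x (Finset.mem_union_left _ hx)), h1 x hx]
        · intro x hx
          rcases Finset.mem_insert.1 hx with rfl | hx
          · rw [Function.update_self]; exact hwC
          · rw [Function.update_of_ne (hne x (Finset.mem_union_right _ hx))]; exact h2 x hx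
        · have hsplit : ∀ x ∈ Q ∪ insert v V, x = v ∨ x ∈ Q ∪ V := by
            intro x hx
            simp only [Finset.mem_union, Finset.mem_insert] at hx ⊢
            tauto
          intro x hx x' hx'
          rcases hsplit x hx with e | k1 <;> rcases hsplit x' hx' with e' | k2
          · rw [e, e', dist_self, dist_self]
          · rw [e, Function.update_self, Function.update_of_ne (hne x' k2), hwx x' k2]
          · rw [e', Function.update_self, Function.update_of_ne (hne x k1), dist_comm, hwx x k1,
              dist_comm]
          · rw [Function.update_of_ne (hne x k1), Function.update_of_ne (hne x' k2), h3 x k1 x' k2]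
        · intro x hx u hu hxu
          rcases Finset.mem_insert.1 hx with rfl | hx
          · rw [Function.update_self]
            intro s hs
            obtain ⟨s', hs', e1, e2, e3⟩ := K u hu u0 hu0 x hvC x hvC hxu hvu0 s hs
            rw [dist_self] at e2
            have e4 : s.2 - s'.2 = 0 := abs_eq_zero.1 (le_antisymm e2 (abs_nonneg _))
            rw [← e1, hwu0 s' hs']; linarith
          · rw [Function.update_of_ne (hne x (Finset.mem_union_right _ hx))]
            exact h4 x hx u hu hxu
  obtain ⟨φ, f1, f2, f3, f4⟩ := hphi V hV1
  have hy' : ∃ y' ∈ C, (∀ x ∈ Q, dist y' x = dist y x) ∧ ∀ v ∈ V, dist y' (φ v) = dist y v := by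
    by_cases hyV : y ∈ V
    · refine ⟨φ y, f2 y hyV, fun x hx => ?_, fun v hv => ?_⟩
      · conv_lhs => rw [← f1 x hx]
        exact f3 y (Finset.mem_union_right _ hyV) x (Finset.mem_union_left _ hx)
      · exact f3 y (Finset.mem_union_right _ hyV) v (Finset.mem_union_right _ hv)
    · have hyQV : y ∉ Q ∪ V := by
        simp only [Finset.mem_union, not_or]; exact ⟨hyQ, hyV⟩
      obtain ⟨y', hy'C, hy'⟩ := hC ((Q ∪ V).image (fun x => (φ x, dist y x))) (by
        refine ⟨fun s hs => ?_, fun s hs t ht => ?_⟩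
        · obtain ⟨x, hx, rfl⟩ := Finset.mem_image.1 hs
          exact hX.dist_ne (fun h => hyQV (h ▸ hx))
        · obtain ⟨x, hx, rfl⟩ := Finset.mem_image.1 hs
          obtain ⟨z, hz, rfl⟩ := Finset.mem_image.1 ht
          simp only
          rw [f3 x hx z hz]
          exact ⟨by linarith [dist_triangle y z x, dist_comm z x], dist_triangle_left _ _ _⟩) (by
        intro s hs
        obtain ⟨x, hx, rfl⟩ := Finset.mem_image.1 hs
        simp only
        rcases Finset.mem_union.1 hx with h | h
        · rw [f1 x h]; exact (hQC' x h).1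
        · exact f2 x h)
      have key : ∀ x ∈ Q ∪ V, dist y' (φ x) = dist y x := fun x hx =>
        hy' (φ x, dist y x) (Finset.mem_image.2 ⟨x, hx, rfl⟩)
      refine ⟨y', hy'C, fun x hx => ?_, fun v hv => key v (Finset.mem_union_right _ hv)⟩
      have := key x (Finset.mem_union_left _ hx)
      rwa [f1 x hx] at this
  obtain ⟨y', hy'C, g1, g2⟩ := hy'
  refine ⟨y', ⟨hy'C, ?_⟩, ?_⟩
  · intro u hu v hv hvu s hs
    have hv0 : ∃ v0 ∈ C, Rz v0 u.1 ∧ dist v0 y = dist v y' := by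
      by_cases hvy : v = y'
      · refine ⟨y, hy, fun s hs => ?_, by rw [hvy, dist_self, dist_self]⟩
        rw [← g1 s.1 (Finset.mem_union_right _ (hdom1 u hu s hs)), ← hvy]
        exact hvu s hs
      · obtain ⟨v0, hv0C, hv0⟩ := hC (insert (y, dist v y') u.1) (by
          refine val_insert hX ((hval u hu).subset Finset.subset_union_left) (hX.dist_ne hvy) ?_
          intro t ht
          rw [← g1 t.1 (Finset.mem_union_right _ (hdom1 u hu t ht)), ← hvu t ht]
          refine ⟨dist_triangle _ _ _, ?_, ?_⟩
          · rw [dist_comm y' t.1]; exact dist_triangle _ _ _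
          · have := dist_triangle y' v t.1
            rw [dist_comm y' v] at this
            linarith) (by
          intro t ht
          rcases Finset.mem_insert.1 ht with h | h
          · rw [h]; exact hy
          · exact hin u hu t (Finset.mem_union_left _ h))
        exact ⟨v0, hv0C, fun t ht => hv0 t (Finset.mem_insert_of_mem ht),
          hv0 (y, dist v y') (Finset.mem_insert_self _ _)⟩
    obtain ⟨v0, hv0C, hv0u, hv0d⟩ := hv0
    obtain ⟨v1, hv1V, hv1u, hv1d⟩ := hV2 u hu v0 hv0C hv0u
    have e1 := f4 v1 hv1V u hu hv1u s hs
    have e2 := g2 v1 hv1V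
    have e3 : dist y' (φ v1) = dist v y' := by rw [e2, dist_comm, hv1d, hv0d]
    rw [← e3, ← e1, abs_le]
    have t1 := dist_triangle y' (φ v1) s.1
    have t2 := dist_triangle (φ v1) y' s.1
    have t3 := dist_triangle y' s.1 (φ v1)
    rw [dist_comm (φ v1) y'] at t2
    rw [dist_comm s.1 (φ v1)] at t3
    refine ⟨⟨by linarith, by linarith⟩, by linarith⟩
  · intro s hs
    rw [g1 s.1 (Finset.mem_union_left _ (Finset.mem_image.2 ⟨s, hs, rfl⟩))]
    exact hyS s hs

structure PState (Good : Finset M → Set M → Prop) (C0 : Set M) (S : Finset (M × ℝ)) (Γ : Set M) where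
  A : Finset M
  φ : M → M
  P : Finset M
  C : Set M
  good : Good P C
  sub : C ⊆ C0
  iso : ∀ x ∈ A, ∀ y ∈ A, dist (φ x) (φ y) = dist x y
  maps : ∀ x ∈ A, φ x ∈ P
  domS : ∀ s ∈ S, s.1 ∈ A ∧ φ s.1 = s.1
  col : ∀ x ∈ A, Rz x S → φ x ∈ Γ

open Classical in
/-- Greedy embedding. -/
lemma greedy [Countable M] (hX : Ctx n b M) (Good : Finset M → Set M → Prop)
    (C0 : Set M) (P0 : Finset M) (S : Finset (M × ℝ)) (hS : Val n b S) (Γ : Set M)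
    (h0 : Good P0 C0) (hP : ∀ P C, Good P C → ∀ p ∈ P, p ∈ C) (hSP : ∀ s ∈ S, s.1 ∈ P0)
    (step : ∀ P C, Good P C → C ⊆ C0 → ∀ q : Finset (M × ℝ), Val n b q → (∀ s ∈ q, s.1 ∈ P) →
      ∃ y P' C', Good P' C' ∧ C' ⊆ C ∧ P ⊆ P' ∧ y ∈ P' ∧ Rz y q ∧ (S ⊆ q → y ∈ Γ)) :
    ∃ φ : M → M, Isometry φ ∧ (∀ x, φ x ∈ C0) ∧ (∀ s ∈ S, φ s.1 = s.1) ∧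
      ∀ x, Rz x S → φ x ∈ Γ := by
  have hst : ∀ (σ : PState Good C0 S Γ) (x : M), ∃ τ : PState Good C0 S Γ,
      σ.A ⊆ τ.A ∧ (∀ a ∈ σ.A, τ.φ a = σ.φ a) ∧ x ∈ τ.A := by
    intro σ x
    by_cases hx : x ∈ σ.A
    · exact ⟨σ, subset_rfl, fun _ _ => rfl, hx⟩
    set q : Finset (M × ℝ) := σ.A.image (fun a => (σ.φ a, dist x a)) with hq
    have hqv : Val n b q := by
      refine ⟨fun s hs => ?_, fun s hs t ht => ?_⟩
      · obtain ⟨a, ha, rfl⟩ := Finset.mem_image.1 hs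
        exact hX.dist_ne (fun h => hx (h ▸ ha))
      · obtain ⟨a, ha, rfl⟩ := Finset.mem_image.1 hs
        obtain ⟨z, hz, rfl⟩ := Finset.mem_image.1 ht
        simp only
        rw [σ.iso a ha z hz]
        exact ⟨by linarith [dist_triangle x z a, dist_comm z a], dist_triangle_left _ _ _⟩
    obtain ⟨y, P', C', k1, k2, k3, k4, k5, k6⟩ := step σ.P σ.C σ.good σ.sub q hqv (by
      intro s hs
      obtain ⟨a, ha, rfl⟩ := Finset.mem_image.1 hs
      exact σ.maps a ha)
    have hya : ∀ a ∈ σ.A, dist y (σ.φ a) = dist x a := fun a ha =>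
      k5 (σ.φ a, dist x a) (Finset.mem_image.2 ⟨a, ha, rfl⟩)
    have hne : ∀ a ∈ σ.A, a ≠ x := fun a ha h => hx (h ▸ ha)
    have hup : ∀ a ∈ σ.A, Function.update σ.φ x y a = σ.φ a := fun a ha =>
      Function.update_of_ne (hne a ha) _ _
    refine ⟨⟨insert x σ.A, Function.update σ.φ x y, P', C', k1, k2.trans σ.sub, ?_, ?_, ?_, ?_⟩,
      Finset.subset_insert _ _, hup, Finset.mem_insert_self _ _⟩
    · intro a ha a' ha'
      rcases Finset.mem_insert.1 ha with e | k1 <;> rcases Finset.mem_insert.1 ha' with e' | k2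
      · rw [e, e', dist_self, dist_self]
      · rw [e, Function.update_self, hup a' k2, hya a' k2]
      · rw [e', Function.update_self, hup a k1, dist_comm, hya a k1, dist_comm]
      · rw [hup a k1, hup a' k2, σ.iso a k1 a' k2]
    · intro a ha
      rcases Finset.mem_insert.1 ha with e | k1
      · rw [e, Function.update_self]; exact k4
      · rw [hup a k1]; exact k3 (σ.maps a k1)
    · intro s hs
      have := σ.domS s hs
      exact ⟨Finset.mem_insert_of_mem this.1, by rw [hup _ this.1, this.2]⟩
    · intro a ha haS
      rcases Finset.mem_insert.1 ha with e | k1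
      · rw [e, Function.update_self]
        apply k6
        intro s hs
        refine Finset.mem_image.2 ⟨s.1, (σ.domS s hs).1, ?_⟩
        rw [(σ.domS s hs).2, ← e, haS s hs]
      · rw [hup a k1]; exact σ.col a k1 haS
  choose nx n1 n2 n3 using hst
  let σ0 : PState Good C0 S Γ := ⟨S.image Prod.fst, id, P0, C0, h0, subset_rfl,
    fun _ _ _ _ => rfl, by
      intro x hx
      obtain ⟨s, hs, rfl⟩ := Finset.mem_image.1 hx
      exact hSP s hs, fun s hs => ⟨Finset.mem_image.2 ⟨s, hs, rfl⟩, rfl⟩, by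
      intro x hx hxS
      obtain ⟨s, hs, rfl⟩ := Finset.mem_image.1 hx
      have := hxS s hs
      rw [dist_self] at this
      linarith [(hS.pos hX hs).2]⟩
  rcases isEmpty_or_nonempty M with hem | hne
  · exact ⟨id, isometry_id, fun x => (hem.false x).elim, fun _ _ => rfl,
      fun x => (hem.false x).elim⟩
  obtain ⟨e, he⟩ := exists_surjective_nat M
  let σ : ℕ → PState Good C0 S Γ := fun k => Nat.rec σ0 (fun k τ => nx τ (e k)) k
  have hs1 : ∀ k, σ (k + 1) = nx (σ k) (e k) := fun k => rfl
  have hmon : ∀ k l, k ≤ l → (σ k).A ⊆ (σ l).A ∧ ∀ a ∈ (σ k).A, (σ l).φ a = (σ k).φ a := by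
    intro k l hkl
    induction l, hkl using Nat.le_induction with
    | base => exact ⟨subset_rfl, fun _ _ => rfl⟩
    | succ l _ ih =>
      rw [hs1]
      refine ⟨ih.1.trans (n1 _ _), fun a ha => ?_⟩
      rw [n2 _ _ a (ih.1 ha), ih.2 a ha]
  choose ix hix using he
  have hmem : ∀ x l, ix x + 1 ≤ l → x ∈ (σ l).A := by
    intro x l hl
    apply (hmon _ _ hl).1
    rw [hs1, hix]; exact n3 _ _
  let ψ : M → M := fun x => (σ (ix x + 1)).φ x
  have hψ : ∀ x l, ix x + 1 ≤ l → ψ x = (σ l).φ x := fun x l hl =>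
    ((hmon _ _ hl).2 x (hmem x _ le_rfl)).symm
  refine ⟨ψ, ?_, ?_, ?_, ?_⟩
  · refine Isometry.of_dist_eq fun x y => ?_
    have h1 : ix x + 1 ≤ max (ix x) (ix y) + 1 := by omega
    have h2 : ix y + 1 ≤ max (ix x) (ix y) + 1 := by omega
    rw [hψ x _ h1, hψ y _ h2]
    exact (σ _).iso x (hmem x _ h1) y (hmem y _ h2)
  · intro x
    exact (σ (ix x + 1)).sub (hP _ _ (σ (ix x + 1)).good _ ((σ (ix x + 1)).maps x (hmem x _ le_rfl)))
  · intro s hs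
    exact ((σ (ix s.1 + 1)).domS s hs).2
  · intro x hx
    exact (σ (ix x + 1)).col x (hmem x _ le_rfl) hx

lemma copy_range {φ : M → M} (hφ : Isometry φ) (hM : Copy n b (Set.univ : Set M)) :
    Copy n b (Set.range φ) := by
  classical
  intro S hS hSC
  obtain ⟨y0, -, -⟩ := hM ∅ ⟨by simp, by simp⟩ (by intro s hs; simp at hs)
  haveI : Nonempty M := ⟨y0⟩
  choose! pre hpre using hSC
  obtain ⟨y, _, hy⟩ := hM (S.image (fun s => (pre s, s.2))) (by
    refine ⟨fun s hs => ?_, fun s hs t ht => ?_⟩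
    · obtain ⟨a, ha, rfl⟩ := Finset.mem_image.1 hs
      exact hS.1 a ha
    · obtain ⟨a, ha, rfl⟩ := Finset.mem_image.1 hs
      obtain ⟨c, hc, rfl⟩ := Finset.mem_image.1 ht
      have := hS.2 a ha c hc
      simp only
      rw [← hφ.dist_eq, hpre a ha, hpre c hc]
      exact this) (fun _ _ => Set.mem_univ _)
  refine ⟨φ y, ⟨y, rfl⟩, fun s hs => ?_⟩
  rw [← hpre s hs, hφ.dist_eq]
  exact hy (pre s, s.2) (Finset.mem_image.2 ⟨s, hs, rfl⟩)

/-- A subcopy fixing `S` from a colour-controlled isometry. -/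
lemma copy_of_greedy (hM : Copy n b (Set.univ : Set M)) {C0 : Set M} {S : Finset (M × ℝ)}
    {Γ : Set M} (h : ∃ φ : M → M, Isometry φ ∧ (∀ x, φ x ∈ C0) ∧ (∀ s ∈ S, φ s.1 = s.1) ∧
      ∀ x, Rz x S → φ x ∈ Γ) :
    ∃ C', Copy n b C' ∧ C' ⊆ C0 ∧ Inn S C' ∧ ∀ c ∈ C', Rz c S → c ∈ Γ := by
  obtain ⟨φ, h1, h2, h3, h4⟩ := h
  refine ⟨Set.range φ, copy_range h1 hM, ?_, fun s hs => ⟨s.1, h3 s hs⟩, ?_⟩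
  · rintro _ ⟨x, rfl⟩; exact h2 x
  · rintro _ ⟨x, rfl⟩ hx
    apply h4
    intro s hs
    have := hx s hs
    rw [← h3 s hs, h1.dist_eq] at this
    exact this

/-- Below any `S'` of rank at least `b (i+1)` there is a type of rank at least `b i` inside `Γ`. -/
def Dense (n : ℕ) (b : ℕ → ℝ) (i : ℕ) (Γ : Set M) (C : Set M) (S : Finset (M × ℝ)) : Prop :=
  ∀ C' S', Copy n b C' → C' ⊆ C → S ⊆ S' → Val n b S' → Inn S' C' → (∀ s ∈ S', b (i + 1) ≤ s.2) →
    ∃ C'' S'', Copy n b C'' ∧ C'' ⊆ C' ∧ S' ⊆ S'' ∧ Val n b S'' ∧ Inn S'' C'' ∧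
      (∀ s ∈ S'', b i ≤ s.2) ∧ ∀ c ∈ C'', Rz c S'' → c ∈ Γ

open Classical in
/-- First half of the step: find `y'` near `y` handling the pair `(ty P c0, k)`. -/
lemma step_one (hX : Ctx n b M) {i : ℕ} (hi : i < n) {Γ C0 C : Set M} {S : Finset (M × ℝ)}
    (hdense : Dense n b i Γ C0 S) (hC : Copy n b C) (hCC0 : C ⊆ C0) {P : Finset M}
    {y y0 c0 : M} (hPC : ∀ p ∈ P, p ∈ C) (hyC : y ∈ C) (hSP : ∀ s ∈ S, s.1 ∈ P)
    (hy0P : y0 ∉ P) (hy : ∀ p ∈ P, dist y p = dist y0 p)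
    {k : ℕ} (hk : k ≤ i) (hc0S : Rz c0 S) (hc0P : ∀ p ∈ P, b (i + 1) ≤ dist c0 p)
    (hcmp : ∀ p ∈ P, |dist c0 p - dist y0 p| ≤ b k)
    (hgood : k + 1 ≤ i → ∀ c ∈ C, Rz c (ty P c0) → dist c y = b (k + 1) → c ∈ Γ) :
    ∃ C1 y', Copy n b C1 ∧ C1 ⊆ C ∧ (∀ p ∈ P, p ∈ C1) ∧ y ∈ C1 ∧ y' ∈ C1 ∧
      (∀ p ∈ P, dist y' p = dist y0 p) ∧ dist y' y = b 0 ∧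
      ∀ c ∈ C1, Rz c (ty P c0) → dist c y = b (k + 1) → dist c y' = b k → c ∈ Γ := by
  have hbpos := hX.pos
  have hy0 : ∀ p ∈ P, b 0 ≤ dist y0 p := fun p hp => hX.le_dist (fun h => hy0P (h ▸ hp))
  have hbase : Val n b (insert (y, b 0) (ty P y0)) := by
    refine val_insert hX (val_ty hX hy0P) ⟨0, Nat.zero_le _, rfl⟩ ?_
    intro s hs
    rw [mem_ty] at hs
    rw [hs.2, hy _ hs.1]
    have := hy0 _ hs.1
    refine ⟨by linarith, by linarith, by linarith⟩
  rcases hk.lt_or_eq with hlt | rfl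
  · obtain ⟨y', hy'C, hy'⟩ := hC _ hbase (by
      intro s hs
      rcases Finset.mem_insert.1 hs with h | h
      · rw [h]; exact hyC
      · exact hPC _ (mem_ty.1 h).1)
    refine ⟨C, y', hC, subset_rfl, hPC, hyC, hy'C, ?_, hy' (y, b 0) (Finset.mem_insert_self _ _), ?_⟩
    · exact rz_ty.1 fun s hs => hy' s (Finset.mem_insert_of_mem hs)
    · intro c hc h1 h2 _
      exact hgood hlt c hc h1 h2
  · have hkey : True := trivial
    have hbi := hX.b_pos hi.le
    have hbi1 := hX.b_pos (Nat.succ_le_of_lt hi)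
    have hb0i : b 0 ≤ b k := hX.mono_le (Nat.zero_le _) hi.le
    have hmi : b k < b (k + 1) := hX.mono _ _ (Nat.lt_succ_self _) hi
    have hgap := hX.gap k hi
    have hc0nP : c0 ∉ P := by
      intro h
      have := hc0P c0 h
      rw [dist_self] at this
      linarith
    have hcmp' : ∀ p ∈ P, dist c0 p ≤ dist y0 p + b k ∧ dist y0 p ≤ dist c0 p + b k := by
      intro p hp
      have := abs_le.1 (hcmp p hp)
      exact ⟨by linarith [this.2], by linarith [this.1]⟩
    set t : Finset (M × ℝ) := insert (y, b (k + 1)) (ty P c0) with ht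
    have htv : Val n b t := by
      refine val_insert hX (val_ty hX hc0nP) ⟨k + 1, hi, rfl⟩ ?_
      intro s hs
      rw [mem_ty] at hs
      rw [hs.2, hy _ hs.1]
      have h1 := hc0P _ hs.1
      have h2 := hcmp' _ hs.1
      have h3 := hy0 _ hs.1
      refine ⟨by linarith, by linarith, by linarith⟩
    obtain ⟨C'', u, hC'', hsub, htu, huv, hui, hub, huΓ⟩ := hdense C t hC hCC0 (by
      intro s hs
      refine Finset.mem_insert_of_mem (mem_ty.2 ⟨hSP s hs, (hc0S s hs).symm⟩)) htv (by
      intro s hs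
      rcases Finset.mem_insert.1 hs with h | h
      · rw [h]; exact hyC
      · exact hPC _ (mem_ty.1 h).1) (by
      intro s hs
      rcases Finset.mem_insert.1 hs with h | h
      · rw [h]
      · rw [(mem_ty.1 h).2]; exact hc0P _ (mem_ty.1 h).1)
    have hyt : (y, b (k + 1)) ∈ t := Finset.mem_insert_self _ _
    have hpt : ∀ p ∈ P, (p, dist c0 p) ∈ t := fun p hp =>
      Finset.mem_insert_of_mem (mem_ty.2 ⟨hp, rfl⟩)
    have hyC'' : y ∈ C'' := hui _ (htu hyt)
    have hPC'' : ∀ p ∈ P, p ∈ C'' := fun p hp => hui _ (htu (hpt p hp))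
    obtain ⟨w, hwC, hw⟩ := hC'' u huv hui
    have hwy : dist w y = b (k + 1) := hw _ (htu hyt)
    have hwp : ∀ p ∈ P, dist w p = dist c0 p := fun p hp => hw _ (htu (hpt p hp))
    obtain ⟨y', hy'C, hy'⟩ := hC'' (insert (w, b k) (insert (y, b 0) (ty P y0))) (by
      refine val_insert hX hbase ⟨k, hi.le, rfl⟩ ?_
      intro s hs
      rcases Finset.mem_insert.1 hs with h | h
      · rw [h]; simp only; rw [hwy]
        refine ⟨by linarith, by linarith, by linarith⟩
      · rw [mem_ty] at h
        rw [h.2, hwp _ h.1]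
        have h1 := hc0P _ h.1
        have h2 := hcmp' _ h.1
        have h3 := hy0 _ h.1
        refine ⟨by linarith, by linarith, by linarith⟩) (by
      intro s hs
      rcases Finset.mem_insert.1 hs with h | h
      · rw [h]; exact hwC
      rcases Finset.mem_insert.1 h with h | h
      · rw [h]; exact hyC''
      · exact hPC'' _ (mem_ty.1 h).1)
    have hy'w : dist y' w = b k := hy' (w, b k) (Finset.mem_insert_self _ _)
    have hy'y : dist y' y = b 0 :=
      hy' (y, b 0) (Finset.mem_insert_of_mem (Finset.mem_insert_self _ _))
    have hy'p : ∀ p ∈ P, dist y' p = dist y0 p :=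
      rz_ty.1 fun s hs => hy' s (Finset.mem_insert_of_mem (Finset.mem_insert_of_mem hs))
    have huv2 : Val n b (insert (y', b k) u) := by
      refine val_insert hX huv ⟨k, hi.le, rfl⟩ ?_
      intro s hs
      rw [← hw s hs, ← hy'w]
      have t1 := dist_triangle w y' s.1
      have t2 := dist_triangle y' w s.1
      have t3 := dist_triangle y' s.1 w
      rw [dist_comm w y'] at t1
      rw [dist_comm s.1 w] at t3
      refine ⟨by linarith, by linarith, by linarith⟩
    have hEq : insert (y', b k) t ∪ u = insert (y', b k) u := by
      rw [Finset.insert_union, Finset.union_eq_right.2 htu]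
    obtain ⟨C1, e1, e2, e3, e4⟩ := trans_ext hX hC'' (insert y' (insert y P)) (by
      intro p hp
      rcases Finset.mem_insert.1 hp with rfl | hp
      · exact hy'C
      rcases Finset.mem_insert.1 hp with rfl | hp
      · exact hyC''
      · exact hPC'' p hp) {(insert (y', b k) t, u)} (by
      intro v hv
      rw [Finset.mem_singleton.1 hv]
      simp only
      rw [hEq]; exact huv2) (by
      intro v hv
      rw [Finset.mem_singleton.1 hv]
      simp only
      rw [hEq]
      intro s hs
      rcases Finset.mem_insert.1 hs with h | h
      · rw [h]; exact hy'C
      · exact hui s h) (by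
      intro v hv
      rw [Finset.mem_singleton.1 hv]
      intro s hs
      rcases Finset.mem_insert.1 hs with h | h
      · rw [h]; exact Finset.mem_insert_self _ _
      rcases Finset.mem_insert.1 h with h | h
      · rw [h]; exact Finset.mem_insert_of_mem (Finset.mem_insert_self _ _)
      · exact Finset.mem_insert_of_mem (Finset.mem_insert_of_mem (mem_ty.1 h).1)) (by
      intro v hv
      rw [Finset.mem_singleton.1 hv]
      intro p hp
      rcases Finset.mem_insert.1 hp with h | h
      · rw [h]; exact ⟨_, Finset.mem_insert_self _ _⟩
      rcases Finset.mem_insert.1 h with h | h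
      · rw [h]; exact ⟨_, Finset.mem_insert_of_mem hyt⟩
      · exact ⟨_, Finset.mem_insert_of_mem (hpt p h)⟩) (by
      intro v hv v' hv'
      rw [Finset.mem_singleton.1 hv, Finset.mem_singleton.1 hv']
      intro x _ x' _ hx hx' s hs
      refine ⟨s, hs, rfl, ?_, ?_⟩
      · rw [sub_self, abs_zero]; exact dist_nonneg
      · have h1 : dist x y' = b k := hx (y', b k) (Finset.mem_insert_self _ _)
        have h2 : dist x' y' = b k := hx' (y', b k) (Finset.mem_insert_self _ _)
        have h3 := hub s hs
        have h4 := dist_triangle_right x x' y'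
        linarith)
    refine ⟨C1, y', e1, e2.trans hsub, ?_, ?_, ?_, hy'p, hy'y, ?_⟩
    · intro p hp
      exact e3 p (Finset.mem_insert_of_mem (Finset.mem_insert_of_mem hp))
    · exact e3 y (Finset.mem_insert_of_mem (Finset.mem_insert_self _ _))
    · exact e3 y' (Finset.mem_insert_self _ _)
    · intro c hc h1 h2 h3
      refine huΓ c (e2 hc) (e4 _ (Finset.mem_singleton_self _) c hc ?_)
      intro s hs
      rcases Finset.mem_insert.1 hs with h | h
      · rw [h]; exact h3
      rcases Finset.mem_insert.1 h with h | h
      · rw [h]; exact h2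
      · exact h1 s h


def Handled (n : ℕ) (b : ℕ → ℝ) (i : ℕ) (Γ : Set M) (P : Finset M) (y0 : M)
    (G : Finset (Finset (M × ℝ))) (k : ℕ) (G' : Finset (Finset (M × ℝ))) (C : Set M) (y : M) :
    Prop :=
  Copy n b C ∧ (∀ p ∈ P, p ∈ C) ∧ y ∈ C ∧ (∀ p ∈ P, dist y p = dist y0 p) ∧
    ∀ g ∈ G, ∀ j, k ≤ j → j ≤ i → (j = k → g ∈ G') → ∀ c ∈ C, Rz c g → dist c y = b j → c ∈ Γ

open Classical in
lemma step_two (hX : Ctx n b M) {i : ℕ} (hi : i < n) {Γ C0 C : Set M} {S : Finset (M × ℝ)}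
    (hdense : Dense n b i Γ C0 S) (hCC0 : C ⊆ C0) {P : Finset M}
    {y y0 : M} (hSP : ∀ s ∈ S, s.1 ∈ P) (hy0P : y0 ∉ P)
    {G G' : Finset (Finset (M × ℝ))}
    (hG : ∀ g ∈ G, ∃ c0, g = ty P c0 ∧ Rz c0 S ∧ ∀ p ∈ P, b (i + 1) ≤ dist c0 p)
    {k : ℕ} (hk : k ≤ i) (hH : Handled n b i Γ P y0 G k G' C y)
    {g0 : Finset (M × ℝ)} (hg0 : g0 ∈ G) :
    ∃ C2 y', C2 ⊆ C ∧ Handled n b i Γ P y0 G k (insert g0 G') C2 y' := by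
  obtain ⟨hC, hPC, hyC, hy, hgd⟩ := hH
  obtain ⟨c0, hg0c, hc0S, hc0P⟩ := hG g0 hg0
  have hbpos := hX.pos
  have hy0 : ∀ p ∈ P, b 0 ≤ dist y0 p := fun p hp => hX.le_dist (fun h => hy0P (h ▸ hp))
  by_cases hcmp : ∀ p ∈ P, |dist c0 p - dist y0 p| ≤ b k
  swap
  · refine ⟨C, y, subset_rfl, hC, hPC, hyC, hy, ?_⟩
    intro g hg j hkj hji hj c hc hcg hcy
    by_cases hspec : j = k ∧ g = g0
    · exfalso
      apply hcmp
      intro p hp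
      rw [hspec.2, hg0c] at hcg
      have h1 := rz_ty.1 hcg p hp
      rw [← h1, ← hy p hp, ← hspec.1, ← hcy, abs_le]
      have t1 := dist_triangle c y p
      have t2 := dist_triangle y c p
      rw [dist_comm y c] at t2
      constructor <;> linarith
    · refine hgd g hg j hkj hji (fun e => ?_) c hc hcg hcy
      rcases Finset.mem_insert.1 (hj e) with h | h
      · exact absurd ⟨e, h⟩ hspec
      · exact h
  obtain ⟨C1, y', hC1, hsub, hPC1, hyC1, hy'C1, hy'p, hy'y, hΓ⟩ :=
    step_one hX hi hdense hC hCC0 hPC hyC hSP hy0P hy hk hc0S hc0P hcmp (by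
      intro hki c hc h1 h2
      exact hgd g0 hg0 (k + 1) (by omega) hki (by omega) c hc (hg0c ▸ h1) h2)
  set m : Finset (M × ℝ) × ℕ → ℕ := fun q => if q = (g0, k) then k + 1 else q.2 with hm
  set U0 : Finset (Finset (M × ℝ) × ℕ) := (G ×ˢ Finset.range (i + 1)).filter (fun q =>
    k ≤ q.2 ∧ (q.2 = k → q.1 ∈ insert g0 G') ∧ ∀ s ∈ q.1, |s.2 - dist y0 s.1| ≤ b q.2) with hU0
  have hU0m : ∀ q ∈ U0, q.1 ∈ G ∧ q.2 ≤ i ∧ k ≤ q.2 ∧ (q.2 = k → q.1 ∈ insert g0 G') ∧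
      ∀ s ∈ q.1, |s.2 - dist y0 s.1| ≤ b q.2 := by
    intro q hq
    rw [hU0, Finset.mem_filter, Finset.mem_product, Finset.mem_range] at hq
    exact ⟨hq.1.1, by omega, hq.2⟩
  have hmq : ∀ q ∈ U0, m q ≤ i + 1 ∧ b q.2 ≤ b (m q) ∧ b (m q) ≤ b q.2 + b 0 := by
    intro q hq
    obtain ⟨-, h1, h2, -, -⟩ := hU0m q hq
    by_cases e : q = (g0, k)
    · have : m q = k + 1 := by simp only [hm]; rw [if_pos e]
      rw [this, e]
      exact ⟨by omega, hX.mono_le (by simp) (by omega), hX.gap k (by omega)⟩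
    · have : m q = q.2 := by simp only [hm]; rw [if_neg e]
      rw [this]
      exact ⟨by omega, le_rfl, by linarith⟩
  have hbj : ∀ q ∈ U0, b 0 ≤ b q.2 := fun q hq =>
    hX.mono_le (Nat.zero_le _) (by have := (hU0m q hq).2.1; omega)
  have hvg : ∀ g ∈ G, Val n b g := by
    intro g hg
    obtain ⟨c, e, h1, h2⟩ := hG g hg
    rw [e]
    apply val_ty hX
    intro h
    have := h2 c h
    rw [dist_self] at this
    linarith [hX.b_pos (Nat.succ_le_of_lt hi)]
  have hgP : ∀ g ∈ G, ∀ s ∈ g, s.1 ∈ P ∧ b (i + 1) ≤ s.2 := by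
    intro g hg s hs
    obtain ⟨c, e, h1, h2⟩ := hG g hg
    rw [e, mem_ty] at hs
    exact ⟨hs.1, by rw [hs.2]; exact h2 _ hs.1⟩
  set F : Finset (M × ℝ) × ℕ → Finset (M × ℝ) × Finset (M × ℝ) :=
    fun q => (insert (y', b q.2) q.1, {(y, b (m q))}) with hF
  obtain ⟨C2, e1, e2, e3, e4⟩ := trans_ext hX hC1 (insert y' P) (by
      intro p hp
      rcases Finset.mem_insert.1 hp with rfl | hp
      · exact hy'C1
      · exact hPC1 p hp) (U0.image F) (by
      intro u hu
      obtain ⟨q, hq, rfl⟩ := Finset.mem_image.1 hu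
      obtain ⟨a1, a2, a3, a4, a5⟩ := hU0m q hq
      obtain ⟨m1, m2, m3⟩ := hmq q hq
      have hb0 := hbj q hq
      have hmi : b (m q) ≤ b (i + 1) := hX.mono_le m1 hi
      simp only [hF]
      rw [Finset.union_comm, ← Finset.insert_eq]
      refine val_insert hX (val_insert hX (hvg _ a1) ⟨q.2, by omega, rfl⟩ ?_)
        ⟨m q, by omega, rfl⟩ ?_
      · intro s hs
        have h1 := hgP _ a1 s hs
        have h2 := abs_le.1 (a5 s hs)
        have h3 := hy0 _ h1.1
        rw [hy'p _ h1.1]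
        refine ⟨by linarith [h2.2], by linarith, by linarith [h2.1]⟩
      · intro s hs
        rcases Finset.mem_insert.1 hs with h | hs
        · rw [h]; simp only; rw [dist_comm, hy'y]
          refine ⟨by linarith, by linarith, by linarith⟩
        · have h1 := hgP _ a1 s hs
          have h2 := abs_le.1 (a5 s hs)
          have h3 := hy0 _ h1.1
          rw [hy _ h1.1]
          refine ⟨by linarith [h2.2], by linarith, by linarith [h2.1]⟩) (by
      intro u hu
      obtain ⟨q, hq, rfl⟩ := Finset.mem_image.1 hu
      obtain ⟨a1, -⟩ := hU0m q hq
      intro s hs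
      rcases Finset.mem_union.1 hs with h | h
      · rcases Finset.mem_insert.1 h with h | h
        · rw [h]; exact hy'C1
        · exact hPC1 _ (hgP _ a1 s h).1
      · rw [Finset.mem_singleton.1 h]; exact hyC1) (by
      intro u hu
      obtain ⟨q, hq, rfl⟩ := Finset.mem_image.1 hu
      obtain ⟨a1, -⟩ := hU0m q hq
      intro s hs
      rcases Finset.mem_insert.1 hs with h | h
      · rw [h]; exact Finset.mem_insert_self _ _
      · exact Finset.mem_insert_of_mem (hgP _ a1 s h).1) (by
      intro u hu
      obtain ⟨q, hq, rfl⟩ := Finset.mem_image.1 hu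
      obtain ⟨a1, -⟩ := hU0m q hq
      obtain ⟨c, e, -⟩ := hG _ a1
      intro p hp
      rcases Finset.mem_insert.1 hp with h | h
      · rw [h]; exact ⟨_, Finset.mem_insert_self _ _⟩
      · exact ⟨dist c p, Finset.mem_insert_of_mem (by rw [e]; exact mem_ty.2 ⟨h, rfl⟩)⟩) (by
      intro u hu u' hu'
      obtain ⟨q, hq, rfl⟩ := Finset.mem_image.1 hu
      obtain ⟨r, hr, rfl⟩ := Finset.mem_image.1 hu'
      obtain ⟨a1, a2, a3, a4, a5⟩ := hU0m q hq
      obtain ⟨b1, b2, b3, b4, b5⟩ := hU0m r hr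
      obtain ⟨m1, m2, m3⟩ := hmq q hq
      obtain ⟨l1, l2, l3⟩ := hmq r hr
      intro v hv v' hv' hvq hvr s hs
      have hs' : s = (y, b (m q)) := Finset.mem_singleton.1 hs
      refine ⟨(y, b (m r)), Finset.mem_singleton_self _, by rw [hs'], ?_, ?_⟩
      swap
      · rw [hs']
        have h1 : dist v y' = b q.2 := hvq (y', b q.2) (Finset.mem_insert_self _ _)
        have h2 : dist v' y' = b r.2 := hvr (y', b r.2) (Finset.mem_insert_self _ _)
        have := dist_triangle_right v v' y'
        simp only
        linarith
      rw [hs']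
      simp only
      have h1 : dist v y' = b q.2 := hvq (y', b q.2) (Finset.mem_insert_self _ _)
      have h2 : dist v' y' = b r.2 := hvr (y', b r.2) (Finset.mem_insert_self _ _)
      have t1 := dist_triangle v v' y'
      have t2 := dist_triangle v' v y'
      rw [dist_comm v' v] at t2
      by_cases eq1 : q = (g0, k) <;> by_cases eq2 : r = (g0, k)
      · rw [eq1, eq2, sub_self, abs_zero]; exact dist_nonneg
      · have k1 : m q = k + 1 := by simp only [hm]; rw [if_pos eq1]
        have k2 : m r = r.2 := by simp only [hm]; rw [if_neg eq2]
        have k3 : q.2 = k := by rw [eq1]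
        rw [k1, k2]
        rw [k3] at h1
        by_cases hrk : r.2 = k
        · have hne : v ≠ v' := by
            intro hvv
            apply eq2
            obtain ⟨c, e, -⟩ := hG _ b1
            have z1 : Rz v (ty P c0) := fun s hs =>
              hvq s (Finset.mem_insert_of_mem (by rw [eq1, hg0c]; exact hs))
            have z2 : Rz v' (ty P c) := fun s hs =>
              hvr s (Finset.mem_insert_of_mem (by rw [e]; exact hs))
            have : r.1 = g0 := by
              rw [e, hg0c]
              ext s
              rw [mem_ty, mem_ty]
              refine and_congr_right fun hs => ?_
              rw [← rz_ty.1 z1 _ hs, ← rz_ty.1 z2 _ hs, hvv]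
            rw [← this, ← hrk]
          rw [hrk]
          have := hX.le_dist hne
          have g1 := hX.gap k (by omega)
          have g2 := hX.mono k (k + 1) (by omega) (by omega)
          rw [abs_le]; constructor <;> linarith
        · have g1 := hX.mono_le (show k + 1 ≤ r.2 by omega) (by omega)
          have g2 := hX.mono k (k + 1) (by omega) (by omega)
          rw [abs_le]; constructor <;> linarith
      · have k1 : m r = k + 1 := by simp only [hm]; rw [if_pos eq2]
        have k2 : m q = q.2 := by simp only [hm]; rw [if_neg eq1]
        have k3 : r.2 = k := by rw [eq2]
        rw [k1, k2]
        rw [k3] at h2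
        by_cases hrk : q.2 = k
        · have hne : v ≠ v' := by
            intro hvv
            apply eq1
            obtain ⟨c, e, -⟩ := hG _ a1
            have z1 : Rz v' (ty P c0) := fun s hs =>
              hvr s (Finset.mem_insert_of_mem (by rw [eq2, hg0c]; exact hs))
            have z2 : Rz v (ty P c) := fun s hs =>
              hvq s (Finset.mem_insert_of_mem (by rw [e]; exact hs))
            have : q.1 = g0 := by
              rw [e, hg0c]
              ext s
              rw [mem_ty, mem_ty]
              refine and_congr_right fun hs => ?_
              rw [← rz_ty.1 z1 _ hs, ← rz_ty.1 z2 _ hs, hvv]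
            rw [← this, ← hrk]
          rw [hrk]
          have := hX.le_dist hne
          have g1 := hX.gap k (by omega)
          have g2 := hX.mono k (k + 1) (by omega) (by omega)
          rw [abs_le]; constructor <;> linarith
        · have g1 := hX.mono_le (show k + 1 ≤ q.2 by omega) (by omega)
          have g2 := hX.mono k (k + 1) (by omega) (by omega)
          rw [abs_le]; constructor <;> linarith
      · have k1 : m r = r.2 := by simp only [hm]; rw [if_neg eq2]
        have k2 : m q = q.2 := by simp only [hm]; rw [if_neg eq1]
        rw [k1, k2, abs_le]; constructor <;> linarith)
  refine ⟨C2, y', e2.trans hsub, e1, fun p hp => e3 p (Finset.mem_insert_of_mem hp),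
    e3 y' (Finset.mem_insert_self _ _), hy'p, ?_⟩
  intro g hg j hkj hji hj c hc hcg hcy'
  have hmemU : (g, j) ∈ U0 := by
    rw [hU0, Finset.mem_filter, Finset.mem_product, Finset.mem_range]
    refine ⟨⟨hg, by simp only; omega⟩, hkj, hj, ?_⟩
    intro s hs
    simp only
    rw [← hcg s hs, ← hy'p _ (hgP g hg s hs).1, ← hcy', abs_le]
    have t1 := dist_triangle c y' s.1
    have t2 := dist_triangle y' c s.1
    rw [dist_comm y' c] at t2
    constructor <;> linarith
  have hfin := e4 (F (g, j)) (Finset.mem_image_of_mem _ hmemU) c hc (by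
    intro s hs
    rcases Finset.mem_insert.1 hs with h | h
    · rw [h]; exact hcy'
    · exact hcg s h)
  have hcy : dist c y = b (m (g, j)) := hfin (y, b (m (g, j))) (Finset.mem_singleton_self _)
  by_cases eq : ((g, j) : Finset (M × ℝ) × ℕ) = (g0, k)
  · have k1 : m (g, j) = k + 1 := by simp only [hm]; rw [if_pos eq]
    rw [k1] at hcy
    obtain ⟨q1, q2⟩ := Prod.mk.inj eq
    exact hΓ c (e2 hc) (by rw [← hg0c, ← q1]; exact hcg) hcy (by rw [← q2]; exact hcy')
  · have k1 : m (g, j) = j := by simp only [hm]; rw [if_neg eq]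
    rw [k1] at hcy
    refine hgd g hg j hkj hji (fun e => ?_) c (hsub (e2 hc)) hcg hcy
    rcases Finset.mem_insert.1 (hj e) with h | h
    · exact absurd (by rw [h, e]) eq
    · exact h

open Classical in
lemma main_lemma (hX : Ctx n b M) {i : ℕ} (hi : i < n) {Γ C0 C : Set M} {S : Finset (M × ℝ)}
    (hdense : Dense n b i Γ C0 S) (hC : Copy n b C) (hCC0 : C ⊆ C0) {P : Finset M}
    {y0 : M} (hPC : ∀ p ∈ P, p ∈ C) (hSP : ∀ s ∈ S, s.1 ∈ P) (hy0P : y0 ∉ P) (hy0C : y0 ∈ C) :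
    ∃ y C', Copy n b C' ∧ C' ⊆ C ∧ y ∈ C' ∧ (∀ p ∈ P, p ∈ C') ∧
      (∀ p ∈ P, dist y p = dist y0 p) ∧
      ∀ c ∈ C', Rz c S → (∀ p ∈ P, b (i + 1) ≤ dist c p) → c ≠ y → dist c y < b (i + 1) →
        c ∈ Γ := by
  set E : Finset ℝ := insert 0 ((Finset.range (n + 1)).image b) with hE
  have hEd : ∀ x y : M, dist x y ∈ E := by
    intro x y
    rcases hX.hd x y with h | ⟨j, hj, h⟩
    · rw [h]; exact Finset.mem_insert_self _ _
    · rw [h]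
      exact Finset.mem_insert_of_mem (Finset.mem_image.2 ⟨j, Finset.mem_range.2 (by omega), rfl⟩)
  set G : Finset (Finset (M × ℝ)) := (P ×ˢ E).powerset.filter (fun g =>
    ∃ c0, g = ty P c0 ∧ Rz c0 S ∧ ∀ p ∈ P, b (i + 1) ≤ dist c0 p) with hGd
  have hG : ∀ g ∈ G, ∃ c0, g = ty P c0 ∧ Rz c0 S ∧ ∀ p ∈ P, b (i + 1) ≤ dist c0 p :=
    fun g hg => (Finset.mem_filter.1 hg).2
  have hGc : ∀ c, Rz c S → (∀ p ∈ P, b (i + 1) ≤ dist c p) → ty P c ∈ G := by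
    intro c h1 h2
    refine Finset.mem_filter.2 ⟨Finset.mem_powerset.2 ?_, c, rfl, h1, h2⟩
    intro s hs
    rw [mem_ty] at hs
    rw [Finset.mem_product]
    exact ⟨hs.1, by rw [hs.2]; exact hEd _ _⟩
  have inner : ∀ k ≤ i, ∀ C y, C ⊆ C0 → Handled n b i Γ P y0 G k ∅ C y →
      ∀ G' : Finset (Finset (M × ℝ)), G' ⊆ G →
      ∃ C2 y', C2 ⊆ C ∧ Handled n b i Γ P y0 G k G' C2 y' := by
    intro k hk C y hCC hH G'
    induction G' using Finset.induction_on with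
    | empty => intro _; exact ⟨C, y, subset_rfl, hH⟩
    | insert g0 G' hg0 ih =>
      intro hsub
      obtain ⟨C2, y', h1, h2⟩ := ih ((Finset.subset_insert _ _).trans hsub)
      obtain ⟨C3, y'', h3, h4⟩ := step_two hX hi hdense (h1.trans hCC) hSP hy0P hG hk h2
        (hsub (Finset.mem_insert_self _ _))
      exact ⟨C3, y'', h3.trans h1, h4⟩
  have outer : ∀ d ≤ i + 1, ∃ C2 y', C2 ⊆ C ∧ Handled n b i Γ P y0 G (i + 1 - d) G C2 y' := by
    intro d
    induction d with
    | zero =>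
      intro _
      exact ⟨C, y0, subset_rfl, hC, hPC, hy0C, fun _ _ => rfl, fun g hg j h1 h2 => by omega⟩
    | succ d ih =>
      intro hd
      obtain ⟨C2, y', h1, q1, q2, q3, q4, q5⟩ := ih (by omega)
      have hH : Handled n b i Γ P y0 G (i + 1 - (d + 1)) ∅ C2 y' := by
        refine ⟨q1, q2, q3, q4, fun g hg j h1 h2 h3 => ?_⟩
        have : j ≠ i + 1 - (d + 1) := fun e => by simpa using h3 e
        exact q5 g hg j (by omega) h2 (fun _ => hg)
      obtain ⟨C3, y3, h3, h4⟩ := inner _ (by omega) C2 y' (h1.trans hCC0) hH G subset_rfl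
      exact ⟨C3, y3, h3.trans h1, h4⟩
  obtain ⟨C2, y', h1, q1, q2, q3, q4, q5⟩ := outer (i + 1) le_rfl
  refine ⟨y', C2, q1, h1, q3, q2, q4, ?_⟩
  intro c hc hcS hcP hne hlt
  obtain ⟨j, hj, hj2⟩ := hX.dist_ne hne
  have hji : j ≤ i := by
    by_contra hcon
    have := hX.mono_le (show i + 1 ≤ j by omega) hj
    linarith
  exact q5 (ty P c) (hGc c hcS hcP) j (by omega) hji (fun _ => hGc c hcS hcP) c hc
    (rz_ty.2 fun _ _ => rfl) hj2

open Classical in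
lemma claimB [Countable M] (hX : Ctx n b M) (hM : Copy n b (Set.univ : Set M)) {i : ℕ}
    (hi : i < n) {Γ C0 : Set M} {S : Finset (M × ℝ)} (hdense : Dense n b i Γ C0 S)
    (hC0 : Copy n b C0) (hS : Val n b S) (hSC : Inn S C0) (hSb : ∀ s ∈ S, b (i + 1) ≤ s.2) :
    ∃ C', Copy n b C' ∧ C' ⊆ C0 ∧ Inn S C' ∧ ∀ c ∈ C', Rz c S → c ∈ Γ := by
  apply copy_of_greedy hM
  set Good : Finset M → Set M → Prop := fun P C => Copy n b C ∧ C ⊆ C0 ∧ (∀ p ∈ P, p ∈ C) ∧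
    (∀ s ∈ S, s.1 ∈ P) ∧
    ∀ c ∈ C, c ∉ P → Rz c S → (∃ p ∈ P, dist c p < b (i + 1)) → c ∈ Γ with hGood
  have hext : ∀ P C, Good P C → ∀ y0 ∈ C, y0 ∉ P → ∃ y C', Good (insert y P) C' ∧ C' ⊆ C ∧
      y ∈ C' ∧ ∀ p ∈ P, dist y p = dist y0 p := by
    rintro P C ⟨h1, h2, h3, h4, h5⟩ y0 hy0 hy0P
    obtain ⟨y, C', k1, k2, k3, k4, k5, k6⟩ := main_lemma hX hi hdense h1 h2 h3 h4 hy0P hy0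
    refine ⟨y, C', ⟨k1, k2.trans h2, ?_, fun s hs => Finset.mem_insert_of_mem (h4 s hs), ?_⟩,
      k2, k3, k5⟩
    · intro p hp
      rcases Finset.mem_insert.1 hp with rfl | hp
      · exact k3
      · exact k4 p hp
    · intro c hc hcP hcS hp
      rw [Finset.mem_insert, not_or] at hcP
      by_cases hclose : ∃ p ∈ P, dist c p < b (i + 1)
      · exact h5 c (k2 hc) hcP.2 hcS hclose
      · push Not at hclose
        obtain ⟨p, hp, hlt⟩ := hp
        rcases Finset.mem_insert.1 hp with rfl | hp
        · exact k6 c hc hcS hclose hcP.1 hlt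
        · exact absurd hlt (not_lt.2 (hclose p hp))
  refine greedy hX Good C0 (S.image Prod.fst) S hS Γ ?_ (fun P C h => h.2.2.1)
    (fun s hs => Finset.mem_image_of_mem _ hs) ?_
  · refine ⟨hC0, subset_rfl, ?_, fun s hs => Finset.mem_image_of_mem _ hs, ?_⟩
    · intro p hp
      obtain ⟨s, hs, rfl⟩ := Finset.mem_image.1 hp
      exact hSC s hs
    · rintro c hc hcP hcS ⟨p, hp, hlt⟩
      obtain ⟨s, hs, rfl⟩ := Finset.mem_image.1 hp
      rw [hcS s hs] at hlt
      exact absurd hlt (not_lt.2 (hSb s hs))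
  · intro P C hG hCC0 q hq hqP
    obtain ⟨y0, hy0C, hy0P, hy0q⟩ := copy_avoid hX hG.1 P _ q le_rfl hq
      (fun s hs => hG.2.2.1 _ (hqP s hs))
    obtain ⟨e, C1, hG1, hsub1, heC1, hep⟩ := hext P C hG y0 hy0C hy0P
    by_cases hSq : S ⊆ q
    swap
    · refine ⟨e, insert e P, C1, hG1, hsub1, Finset.subset_insert _ _,
        Finset.mem_insert_self _ _, ?_, fun h => absurd h hSq⟩
      intro s hs
      rw [hep _ (hqP s hs)]; exact hy0q s hs
    have hbpos := hX.pos
    have hT : Val n b (insert (e, b 0) (ty P y0)) := by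
      refine val_insert hX (val_ty hX hy0P) ⟨0, Nat.zero_le _, rfl⟩ ?_
      intro s hs
      have h1 := ((val_ty hX hy0P).pos hX hs).1
      rw [mem_ty] at hs
      rw [hep _ hs.1, ← hs.2]
      refine ⟨by linarith, by linarith, by linarith⟩
    obtain ⟨y1, hy1C, hy1P, hy1T⟩ := copy_avoid hX hG1.1 (insert e P) _ _ le_rfl hT (by
      intro s hs
      rcases Finset.mem_insert.1 hs with h | h
      · rw [h]; exact heC1
      · exact hG1.2.2.1 _ (Finset.mem_insert_of_mem (mem_ty.1 h).1))
    obtain ⟨y, C2, hG2, hsub2, hyC2, hyp⟩ := hext _ C1 hG1 y1 hy1C hy1P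
    have hye : dist y e = b 0 := by
      rw [hyp e (Finset.mem_insert_self _ _)]
      exact hy1T (e, b 0) (Finset.mem_insert_self _ _)
    have hyq : Rz y q := by
      intro s hs
      have hp := hqP s hs
      rw [hyp _ (Finset.mem_insert_of_mem hp)]
      rw [hy1T (s.1, dist y0 s.1) (Finset.mem_insert_of_mem (mem_ty.2 ⟨hp, rfl⟩))]
      exact hy0q s hs
    refine ⟨y, _, C2, hG2, hsub2.trans hsub1,
      (Finset.subset_insert _ _).trans (Finset.subset_insert _ _),
      Finset.mem_insert_self _ _, hyq, fun _ => ?_⟩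
    refine hG1.2.2.2.2 y (hsub2 hyC2) ?_ (fun s hs => hyq s (hSq hs))
      ⟨e, Finset.mem_insert_self _ _, ?_⟩
    · intro h
      have := hyp y h
      rw [dist_self] at this
      exact hy1P (dist_eq_zero.1 this.symm ▸ h)
    · rw [hye]; exact hX.mono 0 (i + 1) (by omega) hi

open Classical in
lemma levels [Countable M] (hX : Ctx n b M) (hM : Copy n b (Set.univ : Set M)) :
    ∀ i ≤ n, ∀ (Γ C : Set M) (S : Finset (M × ℝ)), Copy n b C → Val n b S → Inn S C →
      (∀ s ∈ S, b i ≤ s.2) →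
      ∃ C' S', Copy n b C' ∧ C' ⊆ C ∧ S ⊆ S' ∧ Val n b S' ∧ Inn S' C' ∧ (∀ s ∈ S', b i ≤ s.2) ∧
        ((∀ c ∈ C', Rz c S' → c ∈ Γ) ∨ (∀ c ∈ C', Rz c S' → c ∉ Γ)) := by
  intro i
  induction i with
  | zero =>
    intro _ Γ C S hC hS hSC hSb
    by_cases hex : ∃ S', S ⊆ S' ∧ Val n b S' ∧ Inn S' C ∧ ∀ c ∈ C, Rz c S' → c ∉ Γ
    · obtain ⟨S', h1, h2, h3, h4⟩ := hex
      exact ⟨C, S', hC, subset_rfl, h1, h2, h3, fun s hs => (h2.pos hX hs).1, Or.inr h4⟩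
    push Not at hex
    obtain ⟨C', k1, k2, k3, k4⟩ := copy_of_greedy hM (greedy hX
      (fun P C' => C' = C ∧ ∀ p ∈ P, p ∈ C) C (S.image Prod.fst) S hS Γ ⟨rfl, by
        intro p hp
        obtain ⟨s, hs, rfl⟩ := Finset.mem_image.1 hp
        exact hSC s hs⟩ (by rintro P C' ⟨rfl, h⟩; exact h)
      (fun s hs => Finset.mem_image_of_mem _ hs) (by
        rintro P C' ⟨rfl, h⟩ _ q hq hqP
        have hqC : Inn q C' := fun s hs => h _ (hqP s hs)
        have : ∃ y ∈ C', Rz y q ∧ (S ⊆ q → y ∈ Γ) := by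
          by_cases hSq : S ⊆ q
          · obtain ⟨c, c1, c2, c3⟩ := hex q hSq hq hqC
            exact ⟨c, c1, c2, fun _ => c3⟩
          · obtain ⟨c, c1, c2⟩ := hC q hq hqC
            exact ⟨c, c1, c2, fun h => absurd h hSq⟩
        obtain ⟨y, y1, y2, y3⟩ := this
        refine ⟨y, insert y P, C', ⟨rfl, ?_⟩, subset_rfl, Finset.subset_insert _ _,
          Finset.mem_insert_self _ _, y2, y3⟩
        intro p hp
        rcases Finset.mem_insert.1 hp with rfl | hp
        · exact y1
        · exact h p hp))
    exact ⟨C', S, k1, k2, subset_rfl, hS, k3, hSb, Or.inl k4⟩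
  | succ i ih =>
    intro hi Γ C S hC hS hSC hSb
    by_cases hd : Dense n b i Γ C S
    · obtain ⟨C', k1, k2, k3, k4⟩ := claimB hX hM hi hd hC hS hSC hSb
      exact ⟨C', S, k1, k2, subset_rfl, hS, k3, hSb, Or.inl k4⟩
    unfold Dense at hd
    push Not at hd
    obtain ⟨C', S', a1, a2, a3, a4, a5, a6, a7⟩ := hd
    have hd2 : Dense n b i Γᶜ C' S' := by
      intro C2 S2 b1 b2 b3 b4 b5 b6
      obtain ⟨C3, S3, d1, d2, d3, d4, d5, d6, d7⟩ := ih (by omega) Γ C2 S2 b1 b4 b5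
        (fun s hs => (hX.mono_le (Nat.le_succ i) hi).trans (b6 s hs))
      refine ⟨C3, S3, d1, d2, d3, d4, d5, d6, ?_⟩
      rcases d7 with d7 | d7
      · obtain ⟨c, c1, c2, c3⟩ := a7 C3 S3 d1 (d2.trans b2) (b3.trans d3) d4 d5 d6
        exact absurd (d7 c c1 c2) c3
      · exact d7
    obtain ⟨C'', k1, k2, k3, k4⟩ := claimB hX hM hi hd2 a1 a4 a5 a6
    exact ⟨C'', S', k1, k2.trans a2, a3, a4, k3, a6, Or.inr k4⟩

open Classical in
/-- From level `n`: a monochromatic isometric image. -/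
lemma final_step [Countable M] (hX : Ctx n b M) {C Γ : Set M} {S : Finset (M × ℝ)}
    (hC : Copy n b C) (hS : Val n b S) (hSC : Inn S C) (hSb : ∀ s ∈ S, b n ≤ s.2)
    (hΓ : ∀ c ∈ C, Rz c S → c ∈ Γ) : ∃ φ : M → M, Isometry φ ∧ ∀ x, φ x ∈ Γ := by
  have hle : ∀ q : Finset (M × ℝ), Val n b q → ∀ s ∈ q, s.2 ≤ b n := by
    intro q hq s hs
    obtain ⟨j, hj, h⟩ := hq.1 s hs
    rw [h]; exact hX.mono_le hj le_rfl
  obtain ⟨φ, h1, -, -, h4⟩ := greedy hX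
    (fun P C' => C' = C ∧ ∀ p ∈ P, p ∈ C ∧ Rz p S) C ∅ ∅ ⟨by simp, by simp⟩ Γ ⟨rfl, by simp⟩
    (by rintro P C' ⟨rfl, h⟩ p hp; exact (h p hp).1) (by simp) (by
      rintro P C' ⟨rfl, h⟩ _ q hq hqP
      obtain ⟨y, y1, y2⟩ := hC (q ∪ S) (by
        refine val_union hq hS ?_
        intro s hs t ht
        have e1 : dist s.1 t.1 = t.2 := (h _ (hqP s hs)).2 t ht
        have e2 := hle q hq s hs
        have e3 := hSb t ht
        have e4 := (hq.pos hX hs).2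
        rw [e1]
        refine ⟨by linarith, by linarith, by linarith⟩) (by
        intro s hs
        rcases Finset.mem_union.1 hs with h' | h'
        · exact (h _ (hqP s h')).1
        · exact hSC s h')
      have y3 : Rz y S := fun s hs => y2 s (Finset.mem_union_right _ hs)
      refine ⟨y, insert y P, C', ⟨rfl, ?_⟩, subset_rfl, Finset.subset_insert _ _,
        Finset.mem_insert_self _ _, fun s hs => y2 s (Finset.mem_union_left _ hs),
        fun _ => hΓ y y1 y3⟩
      intro p hp
      rcases Finset.mem_insert.1 hp with rfl | hp
      · exact ⟨y1, y3⟩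
      · exact h p hp)
  exact ⟨φ, h1, fun x => h4 x (by intro s hs; simp at hs)⟩

/-- distance on a one-point extension -/
noncomputable def odist (P : Finset M) (f : P → ℝ) : Option P → Option P → ℝ
  | none, none => 0
  | none, some p => f p
  | some p, none => f p
  | some p, some q => dist p q

/-- the one-point extension -/
noncomputable def ometric (P : Finset M) (f : P → ℝ) (h0 : ∀ p, 0 < f p)
    (h1 : ∀ p q, f p ≤ f q + dist p q) (h2 : ∀ p q, dist p q ≤ f p + f q) :
    MetricSpace (Option P) where
  dist := odist P f
  dist_self := by
    rintro (_ | p) <;> simp [odist]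
  dist_comm := by
    rintro (_ | p) (_ | q) <;> simp [odist, dist_comm]
  dist_triangle := by
    rintro (_ | p) (_ | q) (_ | r) <;> simp only [odist]
    · simp
    · simp
    · linarith [h0 q]
    · have := h1 r q
      rw [dist_comm] at this; linarith
    · simp
    · exact h2 p r
    · linarith [h1 p q]
    · exact dist_triangle _ _ _
  eq_of_dist_eq_zero := by
    rintro (_ | p) (_ | q) h
    · rfl
    · exact absurd h (h0 q).ne'
    · exact absurd h (h0 p).ne'
    · rw [dist_eq_zero.1 (show dist p q = 0 from h)]

open Classical in
lemma copy_univ {D : Set ℝ} (hX : Ctx n b M) (hbD : ∀ j ≤ n, b j ∈ D) (h0D : (0 : ℝ) ∈ D)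
    (hM : IsUrysohn D M) : Copy n b (Set.univ : Set M) := by
  intro S hS _
  set P : Finset M := S.image Prod.fst with hP
  have hex : ∀ p : P, ∃ a, (p.1, a) ∈ S := by
    rintro ⟨p, hp⟩
    obtain ⟨s, hs, rfl⟩ := Finset.mem_image.1 hp
    exact ⟨s.2, hs⟩
  choose f hf using hex
  have h0 : ∀ p, 0 < f p := fun p => (hS.pos hX (hf p)).2
  have h1 : ∀ p q, f p ≤ f q + dist p q := fun p q => (hS.2 _ (hf p) _ (hf q)).1
  have h2 : ∀ p q, dist p q ≤ f p + f q := fun p q => (hS.2 _ (hf p) _ (hf q)).2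
  obtain ⟨_, hd, hhom, hemb⟩ := hM
  have hfD : ∀ p, f p ∈ D := by
    intro p
    obtain ⟨j, hj, e⟩ := hS.1 _ (hf p)
    simp only at e
    rw [e]; exact hbD j hj
  obtain ⟨g, hg⟩ := @hemb (Option P) (ometric P f h0 h1 h2) inferInstance (by
    rintro (_ | p) (_ | q)
    · exact h0D
    · exact hfD q
    · exact hfD p
    · exact hd p.1 q.1)
  have hgd : ∀ x y, dist (g x) (g y) = odist P f x y := fun x y =>
    @Isometry.dist_eq _ _ (ometric P f h0 h1 h2).toPseudoMetricSpace _ g hg x y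
  have hss : ∀ p q : P, dist (g (some p)) (g (some q)) = dist p.1 q.1 := fun p q => hgd _ _
  have hns : ∀ p : P, dist (g none) (g (some p)) = f p := fun p => hgd _ _
  have hinj : Function.Injective (fun p : P => g (some p)) := by
    intro p q h
    have := hss p q
    simp only at h
    rw [h, dist_self] at this
    exact Subtype.ext (dist_eq_zero.1 this.symm)
  set h : M → M := Function.extend (fun p : P => g (some p)) (fun p => p.1) id with hh
  have hh2 : ∀ p : P, h (g (some p)) = p.1 := fun p => hinj.extend_apply _ _ p
  obtain ⟨e, he⟩ := hhom (Finset.univ.image (fun p : P => g (some p))) h (by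
    intro x hx y hy
    obtain ⟨p, -, rfl⟩ := Finset.mem_image.1 hx
    obtain ⟨q, -, rfl⟩ := Finset.mem_image.1 hy
    rw [hh2, hh2, hss])
  refine ⟨e (g none), Set.mem_univ _, ?_⟩
  intro s hs
  have hsP : s.1 ∈ P := Finset.mem_image_of_mem _ hs
  have k1 : e (g (some ⟨s.1, hsP⟩)) = s.1 := by
    rw [he _ (Finset.mem_image_of_mem _ (Finset.mem_univ _)), hh2]
  have k2 : dist (e (g none)) s.1 = f ⟨s.1, hsP⟩ := by
    conv_lhs => rw [← k1]
    rw [e.isometry.dist_eq, hns]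
  rw [k2]
  have a1 := (hS.2 _ (hf ⟨s.1, hsP⟩) s hs).1
  have a2 := (hS.2 s hs _ (hf ⟨s.1, hsP⟩)).1
  simp only [dist_self] at a1 a2
  linarith

theorem statement17 (D : Set ℝ) (hD : IsUniversalDist D)
    (hblock : IsBlock D (D \ {0})) (M : Type) [MetricSpace M]
    (hM : IsUrysohn D M) (χ : M → Bool) :
    ∃ (i : Bool) (f : M → M), Isometry f ∧ ∀ x : M, χ (f x) = i := by
  obtain ⟨n, b, hB, hbD, hb0, hmono, -, -, hgap⟩ := hblock
  haveI : Countable M := hM.1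
  have hX : Ctx n b M := by
    refine ⟨?_, hb0, ?_, hgap⟩
    · intro x y
      by_cases h : dist x y = 0
      · exact Or.inl h
      · right
        have : dist x y ∈ D \ {0} := ⟨hM.2.1 x y, h⟩
        rw [hB] at this
        exact this
    · intro i j hij
      induction j, hij using Nat.le_induction with
      | base => intro h; exact hmono i h
      | succ j hj ih => intro h; exact (ih (by omega)).trans (hmono j h)
  have hU := copy_univ hX hbD hD.2.1 hM
  obtain ⟨C', S', k1, k2, k3, k4, k5, k6, k7⟩ := levels hX hU n le_rfl {x | χ x = true} Set.univ ∅
    hU ⟨by simp, by simp⟩ (by intro s hs; simp at hs) (by simp)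
  rcases k7 with k7 | k7
  · obtain ⟨φ, h1, h2⟩ := final_step hX k1 k4 k5 k6 k7
    exact ⟨true, φ, h1, h2⟩
  · obtain ⟨φ, h1, h2⟩ := final_step (Γ := {x | χ x = true}ᶜ) hX k1 k4 k5 k6 k7
    exact ⟨false, φ, h1, fun x => by simpa using h2 x⟩

end Sauer
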